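/- Define the sequence k : ℕ → ℝ by k(1) = 1 and k(i+1) = k(i)·e^{⌊k(i)⌋/5} for i ≥ 1. Then there exists a constant C > 0 such that for every real M ≥ 2, the least index i with k(i) ≥ M satisfies i ≤ C·log* M, where log* M denotes the least number j of applications of the binary logarithm needed to bring M down to a value at most 1 (i.e., log* M = 1 for M ∈ (0,2] and log* M = 1 + log*(log₂ M) for M > 2). -/

import Mathlib

/-!
Once `k i ≥ 10`, two steps of the recursion dominate one binary exponential: the first step gives
`k (i + 1) ≥ 4 * k i`, and the second multiplies by `exp (⌊k (i + 1)⌋ / 5)`, which is at least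
`exp ((4 * k i - 1) / 5) ≥ 2 ^ k i`, because `4 / 5 > log 2` (`kseq_two_pow_le`). As
`k (i + 1) ≥ k i + 1 / 5` throughout, the value `10` is reached by the index `46` (`kseq_linear`).
Thus if `j` binary logarithms bring `M` down to at most `2`, then `k` is at least `M` at some index
at most `46 + 2 * j` (`kseq_reaches`). Such a `j` exists (`exists_iterate_logb_le_two`), so the
infimum in `logStar` is attained.
-/

/-- The set in the definition of `logStar` is nonempty: while `x > 2`, a binary logarithm lowers
any integer upper bound of `x` by at least one. -/
lemma exists_iterate_logb_le_two (n : ℕ) :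
    ∀ x : ℝ, x ≤ n + 2 → ∃ j : ℕ, (Real.logb 2)^[j] x ≤ 2 := by
  induction n with
  | zero => intro x hx; exact ⟨0, by simpa using hx⟩
  | succ n ih =>
    intro x hx
    by_cases h2 : x ≤ 2
    · exact ⟨0, h2⟩
    have hpow : n + 1 + 2 ≤ 2 ^ (n + 2) := by
      have h := Nat.lt_two_pow_self (n := n + 2)
      omega
    have hpowr : ((n + 1 : ℕ) : ℝ) + 2 ≤ (2 : ℝ) ^ (n + 2) := by exact_mod_cast hpow
    have hlog : Real.logb 2 x ≤ n + 2 := by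
      rw [Real.logb_le_iff_le_rpow (by norm_num) (by linarith)]
      calc x ≤ (2 : ℝ) ^ (n + 2) := hx.trans hpowr
        _ = (2 : ℝ) ^ ((n : ℝ) + 2) := by rw [← Real.rpow_natCast]; push_cast; rfl
    obtain ⟨j, hj⟩ := ih _ hlog
    exact ⟨j + 1, by simpa [Function.iterate_succ_apply] using hj⟩

lemma kseq_linear (k : ℕ → ℝ) (h1 : k 1 = 1)
    (hrec : ∀ i : ℕ, 1 ≤ i → k (i + 1) = k i * Real.exp ((⌊k i⌋ : ℝ) / 5)) (n : ℕ) :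
    1 + (n : ℝ) / 5 ≤ k (n + 1) := by
  induction n with
  | zero => simp [h1]
  | succ n ih =>
    have hk : 1 ≤ k (n + 1) := le_trans (by simp; positivity) ih
    have hfl : (1 : ℝ) ≤ ⌊k (n + 1)⌋ := by
      exact_mod_cast Int.le_floor.2 (by simpa using hk)
    have hexp := Real.add_one_le_exp ((⌊k (n + 1)⌋ : ℝ) / 5)
    rw [hrec (n + 1) (by omega)]
    push_cast
    nlinarith

lemma kseq_two_pow_le (k : ℕ → ℝ)
    (hrec : ∀ i : ℕ, 1 ≤ i → k (i + 1) = k i * Real.exp ((⌊k i⌋ : ℝ) / 5))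
    (i : ℕ) (hi : 1 ≤ i) (hk : 10 ≤ k i) : (2 : ℝ) ^ k i ≤ k (i + 2) ∧ 10 ≤ k (i + 2) := by
  have hfour : 4 * k i ≤ k (i + 1) := by
    have hfl : (10 : ℝ) ≤ ⌊k i⌋ := by
      exact_mod_cast Int.le_floor.2 (by simpa using hk)
    have hquad := Real.quadratic_le_exp_of_nonneg (x := (⌊k i⌋ : ℝ) / 5) (by linarith)
    have hexp : 4 ≤ Real.exp ((⌊k i⌋ : ℝ) / 5) := by nlinarith
    rw [hrec i hi]
    nlinarith
  have hfl : k (i + 1) - 1 < ⌊k (i + 1)⌋ := Int.sub_one_lt_floor _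
  have hlog := Real.log_two_lt_d9
  have hexp : (2 : ℝ) ^ k i ≤ Real.exp ((⌊k (i + 1)⌋ : ℝ) / 5) := by
    rw [Real.rpow_def_of_pos (by norm_num), Real.exp_le_exp]
    nlinarith
  have hone : 1 ≤ Real.exp ((⌊k (i + 1)⌋ : ℝ) / 5) := Real.one_le_exp (by linarith)
  rw [show i + 2 = i + 1 + 1 from rfl, hrec (i + 1) (by omega)]
  constructor <;> nlinarith

/-- The bound `10 ≤ k i` is carried along so that `kseq_two_pow_le` applies at every stage. -/
lemma kseq_reaches (k : ℕ → ℝ) (h1 : k 1 = 1)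
    (hrec : ∀ i : ℕ, 1 ≤ i → k (i + 1) = k i * Real.exp ((⌊k i⌋ : ℝ) / 5)) (j : ℕ) :
    ∀ M : ℝ, (Real.logb 2)^[j] M ≤ 2 → ∃ i, 1 ≤ i ∧ i ≤ 46 + 2 * j ∧ 10 ≤ k i ∧ M ≤ k i := by
  induction j with
  | zero =>
    intro M hM
    have h := kseq_linear k h1 hrec 45
    norm_num at h hM
    exact ⟨46, by norm_num, by norm_num, h, by linarith⟩
  | succ j ih =>
    intro M hM
    obtain ⟨i, hi, hij, h10, hMi⟩ := ih (Real.logb 2 M) (by simpa using hM)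
    obtain ⟨hpow, hten⟩ := kseq_two_pow_le k hrec i hi h10
    refine ⟨i + 2, by omega, by omega, hten, ?_⟩
    -- For `M ≤ 0` the logarithm carries no information, but then the bound is trivial.
    rcases le_or_gt M 0 with hM0 | hM0
    · linarith
    · exact ((Real.logb_le_iff_le_rpow (by norm_num) hM0).1 hMi).trans hpow


/-- The iterated-logarithm function `log*`: `log* x = 1` for `x ≤ 2` and
`log* x = 1 + log*(log₂ x)` for `x > 2`; equivalently, `1` plus the least number
of applications of the binary logarithm bringing `x` down to a value at most `2`
(after which one more application yields a value at most `1`). -/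
noncomputable def logStar (x : ℝ) : ℕ :=
  1 + sInf {j : ℕ | (Real.logb 2)^[j] x ≤ 2}

/-- For the sequence `k(1) = 1`, `k(i+1) = k(i)·e^{⌊k(i)⌋/5}`, there is a constant
`C > 0` such that for every `M ≥ 2` the least index `i` with `k(i) ≥ M` satisfies
`i ≤ C·log* M`. -/
theorem kseq_reaches_in_logStar (k : ℕ → ℝ) (h1 : k 1 = 1)
    (hrec : ∀ i : ℕ, 1 ≤ i → k (i + 1) = k i * Real.exp ((⌊k i⌋ : ℝ) / 5)) :
    ∃ C : ℝ, 0 < C ∧ ∀ M : ℝ, 2 ≤ M →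
      ((sInf {i : ℕ | M ≤ k i} : ℕ) : ℝ) ≤ C * logStar M := by
  refine ⟨46, by norm_num, fun M _ => ?_⟩
  obtain ⟨n, hn⟩ := exists_nat_ge M
  have hne : {j : ℕ | (Real.logb 2)^[j] M ≤ 2}.Nonempty :=
    exists_iterate_logb_le_two n M (by linarith)
  obtain ⟨i, -, hij, -, hMi⟩ := kseq_reaches k h1 hrec _ M (Nat.sInf_mem hne)
  have hle : sInf {i : ℕ | M ≤ k i} ≤ i := Nat.sInf_le hMi
  have hfin : sInf {i : ℕ | M ≤ k i} ≤ 46 * logStar M := by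
    unfold logStar
    omega
  exact_mod_cast hfin
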